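/- Let E be a real Hilbert space and q > 1. With F : E → E defined by F(x) = ‖x‖^(q−1) • x for x ≠ 0 and F(0) = 0, and A_λ : E → E defined by A_λ h = ‖λ‖^(q−1) • h + (q−1)·‖λ‖^(q−3)·⟪λ, h⟫ • λ for λ ≠ 0 and A_0 = 0, for all a, b ∈ E one has F(a) − F(b) = ∫₀¹ A_{b+σ(a−b)} (a − b) dσ, where the integral is a Bochner integral over σ ∈ [0,1]. -/

import Mathlib

open scoped Classical

/-!
The map `x ↦ ‖x‖ ^ p • x` is continuously differentiable for `p > 0`. Away from the origin this is
the product rule. At the origin the map is `o(‖x‖)`, so its derivative vanishes there, and the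
derivative is continuous because its norm is at most `(1 + |p|) * ‖x‖ ^ p`. The fundamental theorem
of calculus along the segment from `b` to `a`, with `p = q - 1`, then gives the formula.
-/

open Filter Topology

theorem sub_eq_integral_of_hasFDerivAt_segment {V W : Type*}
    [NormedAddCommGroup V] [NormedSpace ℝ V]
    [NormedAddCommGroup W] [NormedSpace ℝ W] [CompleteSpace W]
    {f : V → W} {f' : V → V →L[ℝ] W} {a b : V}
    (hf : ∀ x ∈ segment ℝ b a, HasFDerivAt f (f' x) x)
    (hf' : ContinuousOn f' (segment ℝ b a)) :
    f a - f b = ∫ σ in (0 : ℝ)..1, f' (b + σ • (a - b)) (a - b) := by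
  have mem_segment : ∀ σ ∈ Set.uIcc (0 : ℝ) 1, b + σ • (a - b) ∈ segment ℝ b a := by
    intro σ hσ
    rw [Set.uIcc_of_le zero_le_one] at hσ
    exact segment_eq_image' ℝ b a ▸ Set.mem_image_of_mem _ hσ
  have hasDerivAt_path (σ : ℝ) : HasDerivAt (fun σ : ℝ ↦ b + σ • (a - b)) (a - b) σ := by
    simpa using ((hasDerivAt_id σ).smul_const (a - b)).const_add b
  have hasDerivAt_comp : ∀ σ ∈ Set.uIcc (0 : ℝ) 1,
      HasDerivAt (fun σ : ℝ ↦ f (b + σ • (a - b))) (f' (b + σ • (a - b)) (a - b)) σ :=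
    fun σ hσ ↦ (hf _ (mem_segment σ hσ)).comp_hasDerivAt σ (hasDerivAt_path σ)
  have continuousOn_deriv :
      ContinuousOn (fun σ : ℝ ↦ f' (b + σ • (a - b)) (a - b)) (Set.uIcc 0 1) :=
    (hf'.comp (by fun_prop) mem_segment).clm_apply continuousOn_const
  rw [intervalIntegral.integral_eq_sub_of_hasDerivAt hasDerivAt_comp
    continuousOn_deriv.intervalIntegrable]
  simp only [one_smul, zero_smul, add_zero, add_sub_cancel]

theorem tendsto_norm_rpow_zero {E : Type*} [SeminormedAddCommGroup E] {p : ℝ} (hp : 0 < p) :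
    Tendsto (fun x : E ↦ ‖x‖ ^ p) (𝓝 0) (𝓝 0) := by
  have h : Continuous fun x : E ↦ ‖x‖ ^ p := continuous_norm.rpow_const fun _ ↦ Or.inr hp.le
  simpa only [norm_zero, Real.zero_rpow hp.ne'] using h.tendsto 0

section NormRpowSMul

variable {E : Type*} [NormedAddCommGroup E] [InnerProductSpace ℝ E] {p : ℝ} {x : E}

theorem hasFDerivAt_norm_rpow_of_ne_zero (p : ℝ) (hx : x ≠ 0) :
    HasFDerivAt (fun y : E ↦ ‖y‖ ^ p) ((p * ‖x‖ ^ (p - 2)) • innerSL ℝ x) x := by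
  have rpow_sq (y : E) (r : ℝ) : (‖y‖ ^ 2) ^ r = ‖y‖ ^ (2 * r) :=
    (Real.rpow_natCast_mul (norm_nonneg y) 2 r).symm
  have h := (hasStrictFDerivAt_norm_sq x).hasFDerivAt.rpow_const (p := p / 2)
    (Or.inl (pow_ne_zero 2 (norm_ne_zero_iff.2 hx)))
  simp only [rpow_sq, mul_sub, mul_div_cancel₀ p two_ne_zero, mul_one] at h
  refine h.congr_fderiv ?_
  rw [← Nat.cast_smul_eq_nsmul ℝ, smul_smul]
  congr 1
  push_cast
  ring

/-- The Fréchet derivative of `x ↦ ‖x‖ ^ p • x`. For `p > 0` the formula needs no separate clause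
at `x = 0`: there both summands vanish, whatever the value of `0 ^ (p - 2)`. -/
noncomputable def normRpowSMulFDeriv (p : ℝ) (x : E) : E →L[ℝ] E :=
  ‖x‖ ^ p • ContinuousLinearMap.id ℝ E + (p * ‖x‖ ^ (p - 2)) • (innerSL ℝ x).smulRight x

theorem normRpowSMulFDeriv_zero (hp : p ≠ 0) : normRpowSMulFDeriv p (0 : E) = 0 := by
  simp [normRpowSMulFDeriv, Real.zero_rpow hp]

theorem norm_normRpowSMulFDeriv_le (p : ℝ) (x : E) :
    ‖normRpowSMulFDeriv p x‖ ≤ (1 + |p|) * ‖x‖ ^ p := by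
  have norm_id_term : ‖‖x‖ ^ p • ContinuousLinearMap.id ℝ E‖ ≤ ‖x‖ ^ p := by
    rw [norm_smul, Real.norm_of_nonneg (by positivity)]
    exact mul_le_of_le_one_right (by positivity) ContinuousLinearMap.norm_id_le
  have norm_rank_one_term :
      ‖(p * ‖x‖ ^ (p - 2)) • (innerSL ℝ x).smulRight x‖ ≤ |p| * ‖x‖ ^ p := by
    rcases eq_or_ne x 0 with rfl | hx
    · simpa using by positivity
    · have rpow_mul_sq : ‖x‖ ^ (p - 2) * (‖x‖ * ‖x‖) = ‖x‖ ^ p := by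
        rw [← sq, ← Real.rpow_natCast, ← Real.rpow_add (norm_pos_iff.2 hx), Nat.cast_ofNat,
          sub_add_cancel]
      rw [norm_smul, norm_mul, Real.norm_eq_abs, Real.norm_of_nonneg (by positivity),
        ContinuousLinearMap.norm_smulRight_apply, innerSL_apply_norm, mul_assoc, rpow_mul_sq]
  calc ‖normRpowSMulFDeriv p x‖ ≤ ‖x‖ ^ p + |p| * ‖x‖ ^ p :=
        norm_add_le_of_le norm_id_term norm_rank_one_term
    _ = (1 + |p|) * ‖x‖ ^ p := by ring

theorem hasFDerivAt_norm_rpow_smul_zero (hp : 0 < p) :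
    HasFDerivAt (fun y : E ↦ ‖y‖ ^ p • y) (0 : E →L[ℝ] E) 0 := by
  rw [hasFDerivAt_iff_isLittleO_nhds_zero]
  simpa using ((Asymptotics.isLittleO_one_iff ℝ).2 (tendsto_norm_rpow_zero hp)).smul_isBigO
    (Asymptotics.isBigO_refl (fun y : E ↦ y) (𝓝 0))

theorem hasFDerivAt_norm_rpow_smul_of_ne_zero (p : ℝ) (hx : x ≠ 0) :
    HasFDerivAt (fun y : E ↦ ‖y‖ ^ p • y) (normRpowSMulFDeriv p x) x := by
  refine ((hasFDerivAt_norm_rpow_of_ne_zero p hx).smul (hasFDerivAt_id x)).congr_fderiv ?_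
  ext h
  simp [normRpowSMulFDeriv, smul_smul]

theorem hasFDerivAt_norm_rpow_smul (hp : 0 < p) (x : E) :
    HasFDerivAt (fun y : E ↦ ‖y‖ ^ p • y) (normRpowSMulFDeriv p x) x := by
  rcases eq_or_ne x 0 with rfl | hx
  · exact normRpowSMulFDeriv_zero (E := E) hp.ne' ▸ hasFDerivAt_norm_rpow_smul_zero hp
  · exact hasFDerivAt_norm_rpow_smul_of_ne_zero p hx

theorem continuousAt_normRpowSMulFDeriv_of_ne_zero (p : ℝ) (hx : x ≠ 0) :
    ContinuousAt (normRpowSMulFDeriv p : E → E →L[ℝ] E) x := by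
  have continuousAt_rpow (r : ℝ) : ContinuousAt (fun y : E ↦ ‖y‖ ^ r) x :=
    continuous_norm.continuousAt.rpow_const (Or.inl (norm_ne_zero_iff.2 hx))
  have continuous_rank_one : Continuous fun y : E ↦ (innerSL ℝ y).smulRight y :=
    ((ContinuousLinearMap.smulRightL ℝ E E).comp (innerSL ℝ)).continuous.clm_apply continuous_id
  exact ((continuousAt_rpow p).smul continuousAt_const).add
    ((continuousAt_const.mul (continuousAt_rpow (p - 2))).smul continuous_rank_one.continuousAt)

theorem continuousAt_normRpowSMulFDeriv_zero (hp : 0 < p) :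
    ContinuousAt (normRpowSMulFDeriv p : E → E →L[ℝ] E) 0 := by
  rw [ContinuousAt, normRpowSMulFDeriv_zero hp.ne']
  refine squeeze_zero_norm (norm_normRpowSMulFDeriv_le p) ?_
  simpa only [mul_zero] using (tendsto_norm_rpow_zero hp).const_mul (1 + |p|)

theorem continuous_normRpowSMulFDeriv (hp : 0 < p) :
    Continuous (normRpowSMulFDeriv p : E → E →L[ℝ] E) := by
  refine continuous_iff_continuousAt.2 fun x ↦ ?_
  rcases eq_or_ne x 0 with rfl | hx
  · exact continuousAt_normRpowSMulFDeriv_zero hp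
  · exact continuousAt_normRpowSMulFDeriv_of_ne_zero p hx

end NormRpowSMul

/-- Mean-value integral representation for the damping nonlinearity
`F(x) = ‖x‖^(q−1) • x` on a real Hilbert space, `q > 1`:
`F(a) − F(b) = ∫₀¹ A_{b+σ(a−b)} (a−b) dσ`, where `A_λ` is the Fréchet
derivative of `F` at `λ`. -/
theorem sub_eq_integral_fderiv_segment
    {E : Type*} [NormedAddCommGroup E] [InnerProductSpace ℝ E] [CompleteSpace E]
    (q : ℝ) (hq : 1 < q)
    (F : E → E)
    (hF : ∀ x : E, F x = if x = 0 then 0 else ‖x‖ ^ (q - 1) • x)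
    (A : E → (E →L[ℝ] E))
    (hA : ∀ lam : E, A lam = if lam = 0 then 0 else
      ‖lam‖ ^ (q - 1) • ContinuousLinearMap.id ℝ E
        + ((q - 1) * ‖lam‖ ^ (q - 3)) • (innerSL ℝ lam).smulRight lam) :
    ∀ a b : E, F a - F b = ∫ σ in (0:ℝ)..1, (A (b + σ • (a - b))) (a - b) := by
  intro a b
  have hp : 0 < q - 1 := sub_pos.2 hq
  obtain rfl : F = fun x ↦ ‖x‖ ^ (q - 1) • x := by
    funext x
    rw [hF]
    split_ifs with hx
    · rw [hx, smul_zero]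
    · rfl
  obtain rfl : A = normRpowSMulFDeriv (q - 1) := by
    funext x
    rw [hA]
    split_ifs with hx
    · rw [hx, normRpowSMulFDeriv_zero hp.ne']
    · rw [normRpowSMulFDeriv, show q - 1 - 2 = q - 3 by ring]
  exact sub_eq_integral_of_hasFDerivAt_segment
    (fun x _ ↦ hasFDerivAt_norm_rpow_smul hp x) (continuous_normRpowSMulFDeriv hp).continuousOn
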